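/- Let θ > 0, A ∈ ℝ^{d×d}, B ∈ ℝ^{d×m}, C ∈ ℝ^{k×d}, σ ∈ ℝ^{d×n}, R ∈ ℝ^{m×m} symmetric positive definite, and suppose there exists a symmetric positive semidefinite matrix R̃ ∈ ℝ^{m×m} with B R⁻¹ Bᵀ = 2θ σσᵀ + θ B R̃ Bᵀ. Let S : [0,T] → ℝ^{d×d} be a continuously differentiable symmetric-positive-definite-matrix-valued function satisfying (d/dt)S_t = A S_t + S_t Aᵀ + θ S_t CᵀC S_t − (1/θ)(B R⁻¹ Bᵀ − θ σσᵀ), and let ρ(t,z) := (2π)^{−d/2} (det S_t)^{−1/2} exp(−½ zᵀ S_t⁻¹ z). Then for all t ∈ [0,T] and z ∈ ℝ^d, ∂ρ/∂t (t,z) = −∇_z·( ρ(t,·) ( A(·) + (θ/2) S_t CᵀC (·) ) )(z) − ½ tr( (B R̃ Bᵀ + σσᵀ) ∇_z²ρ(t,z) ); that is, the Fokker–Planck equation of the mean-field process holds with the correction term identically zero and exploration-noise diffusion matrix B R̃ Bᵀ. -/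

import Mathlib

open Matrix

/-- Partial derivative in direction `i`. -/
noncomputable def pd {d : ℕ} (i : Fin d) (f : (Fin d → ℝ) → ℝ) (x : Fin d → ℝ) : ℝ :=
  fderiv ℝ f x (Pi.single i 1)

/-- Spatial gradient. -/
noncomputable def grad {d : ℕ} (f : (Fin d → ℝ) → ℝ) (x : Fin d → ℝ) : Fin d → ℝ :=
  fun i => pd i f x

/-- Spatial Hessian as a matrix. -/
noncomputable def hess {d : ℕ} (f : (Fin d → ℝ) → ℝ) (x : Fin d → ℝ) :
    Matrix (Fin d) (Fin d) ℝ :=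
  Matrix.of fun i j => pd i (fun y => pd j f y) x

/-- Divergence of a vector field. -/
noncomputable def dvg {d : ℕ} (v : (Fin d → ℝ) → (Fin d → ℝ)) (x : Fin d → ℝ) : ℝ :=
  ∑ i, pd i (fun y => v y i) x

/-- The Jacobi formula for the derivative of the determinant. -/
theorem hasDerivAt_det {d : ℕ} {S : ℝ → Matrix (Fin d) (Fin d) ℝ} {S' : Matrix (Fin d) (Fin d) ℝ}
    {t : ℝ} (hS : ∀ i j, HasDerivAt (fun s => S s i j) (S' i j) t) :
    HasDerivAt (fun s => (S s).det) (((S t).adjugate * S').trace) t := by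
  let D : ContinuousMultilinearMap ℝ (fun _ : Fin d => Fin d → ℝ) ℝ :=
    { toMultilinearMap := (detRowAlternating (R := ℝ) (n := Fin d)).toMultilinearMap
      cont := Continuous.matrix_det (A := fun M : Fin d → Fin d → ℝ => Matrix.of M) continuous_id }
  have hrow : HasDerivAt (fun s i => S s i) (fun i => S' i) t :=
    hasDerivAt_pi.2 fun i => hasDerivAt_pi.2 fun j => hS i j
  have hdet := (D.hasFDerivAt (x := fun i => S t i)).comp_hasDerivAt t hrow
  have hsum : (D.linearDeriv fun i => S t i) (fun i => S' i) = ((S t).adjugate * S').trace := by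
    rw [ContinuousMultilinearMap.linearDeriv_apply]
    have hterm (i : Fin d) :
        D (Function.update (fun i => S t i) i (S' i)) = ∑ j, (S t).adjugate j i * S' i j := by
      change ((S t).updateRow i (S' i)).det = _
      rw [← cramer_transpose_apply, cramer_eq_adjugate_mulVec, ← adjugate_transpose]
      rfl
    simp_rw [hterm, Matrix.trace, Matrix.diag, Matrix.mul_apply]
    exact Finset.sum_comm
  rw [← hsum]
  exact hdet

section MatrixInverse

attribute [local instance] Matrix.linftyOpNormedRing Matrix.linftyOpNormedAlgebra

theorem hasDerivAt_inv_apply {d : ℕ} {S : ℝ → Matrix (Fin d) (Fin d) ℝ}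
    {S' : Matrix (Fin d) (Fin d) ℝ} {t : ℝ} (hunit : IsUnit (S t))
    (hS : ∀ i j, HasDerivAt (fun s => S s i j) (S' i j) t) (i j : Fin d) :
    HasDerivAt (fun s => (S s)⁻¹ i j) (-((S t)⁻¹ * S' * (S t)⁻¹) i j) t := by
  have hmat : HasDerivAt S S' t :=
    hasDerivAt_pi.2 fun i => hasDerivAt_pi.2 fun j => hS i j
  obtain ⟨u, hu⟩ := hunit
  have hinv := hasFDerivAt_ringInverse (𝕜 := ℝ) u
  rw [hu] at hinv
  have hcomp := hinv.comp_hasDerivAt t hmat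
  have hval : (↑u⁻¹ : Matrix (Fin d) (Fin d) ℝ) = (S t)⁻¹ := by
    rw [← hu, Matrix.coe_units_inv]
  have hcomp' : HasDerivAt (fun s => (S s)⁻¹) (-((S t)⁻¹ * S' * (S t)⁻¹)) t := by
    simp_rw [Matrix.nonsing_inv_eq_ringInverse]
    rw [← Matrix.nonsing_inv_eq_ringInverse, ← hval]
    simpa using! hcomp
  exact hasDerivAt_pi.1 (hasDerivAt_pi.1 hcomp' i) j

end MatrixInverse

theorem hasFDerivAt_quadratic {d : ℕ} {P : Matrix (Fin d) (Fin d) ℝ} (hP : Pᵀ = P)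
    (x : Fin d → ℝ) :
    HasFDerivAt (fun y => y ⬝ᵥ P *ᵥ y)
      (∑ i, (2 * (P *ᵥ x) i) • ContinuousLinearMap.proj (R := ℝ) (φ := fun _ : Fin d => ℝ) i) x := by
  have hc (i : Fin d) : HasFDerivAt (fun y : Fin d → ℝ => y i)
      (ContinuousLinearMap.proj (R := ℝ) (φ := fun _ : Fin d => ℝ) i) x := hasFDerivAt_apply i x
  have h := HasFDerivAt.fun_sum (u := Finset.univ) fun i _ =>
    (hc i).mul (HasFDerivAt.fun_sum (u := Finset.univ) fun j _ => (hc j).const_mul (P i j))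
  refine h.congr_fderiv ?_
  ext v
  have hsym : x ⬝ᵥ P *ᵥ v = P *ᵥ x ⬝ᵥ v := by
    rw [dotProduct_mulVec, ← mulVec_transpose, hP]
  trans x ⬝ᵥ P *ᵥ v + P *ᵥ x ⬝ᵥ v
  · simp [mulVec, dotProduct, Finset.sum_add_distrib]
  · rw [hsym]
    simp [dotProduct, ← two_mul, Finset.mul_sum, mul_assoc]

theorem hasFDerivAt_gaussian {d : ℕ} {P : Matrix (Fin d) (Fin d) ℝ} (hP : Pᵀ = P) (c : ℝ)
    (x : Fin d → ℝ) :
    HasFDerivAt (fun y => c * Real.exp (-(1 / 2) * (y ⬝ᵥ P *ᵥ y)))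
      (∑ i, (-(c * Real.exp (-(1 / 2) * (x ⬝ᵥ P *ᵥ x))) * (P *ᵥ x) i) •
        ContinuousLinearMap.proj (R := ℝ) (φ := fun _ : Fin d => ℝ) i) x := by
  refine ((((hasFDerivAt_quadratic hP x).const_mul (-(1 / 2))).exp).const_mul c).congr_fderiv ?_
  ext v
  simp only [_root_.smul_apply, _root_.sum_apply, smul_eq_mul, Finset.mul_sum]
  exact Finset.sum_congr rfl fun i _ => by ring

theorem pd_gaussian {d : ℕ} {P : Matrix (Fin d) (Fin d) ℝ} (hP : Pᵀ = P) {c : ℝ}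
    {g : (Fin d → ℝ) → ℝ} (hg : ∀ y, g y = c * Real.exp (-(1 / 2) * (y ⬝ᵥ P *ᵥ y)))
    (i : Fin d) (x : Fin d → ℝ) : pd i g x = -(g x * (P *ᵥ x) i) := by
  have h := hasFDerivAt_gaussian hP c x
  simp_rw [← hg] at h
  rw [pd, h.fderiv]
  simp [Pi.single_apply]

theorem pd_gaussian_mul_linear {d : ℕ} {P : Matrix (Fin d) (Fin d) ℝ} (hP : Pᵀ = P) {c : ℝ}
    {g : (Fin d → ℝ) → ℝ} (hg : ∀ y, g y = c * Real.exp (-(1 / 2) * (y ⬝ᵥ P *ᵥ y)))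
    (F : Matrix (Fin d) (Fin d) ℝ) (i j : Fin d) (x : Fin d → ℝ) :
    pd i (fun y => g y * (F *ᵥ y) j) x = g x * (F j i - (P *ᵥ x) i * (F *ᵥ x) j) := by
  have h := hasFDerivAt_gaussian hP c x
  simp_rw [← hg] at h
  have hc (l : Fin d) : HasFDerivAt (fun y : Fin d → ℝ => y l)
      (ContinuousLinearMap.proj (R := ℝ) (φ := fun _ : Fin d => ℝ) l) x := hasFDerivAt_apply l x
  have hF : HasFDerivAt (fun y => (F *ᵥ y) j)
      (∑ l, F j l • ContinuousLinearMap.proj (R := ℝ) (φ := fun _ : Fin d => ℝ) l) x :=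
    HasFDerivAt.fun_sum (u := Finset.univ) fun l _ =>
      (hc l).const_mul (F j l)
  rw [pd, (h.fun_mul hF).fderiv]
  simp [Pi.single_apply]
  ring

theorem dvg_gaussian_smul_linear {d : ℕ} {P : Matrix (Fin d) (Fin d) ℝ} (hP : Pᵀ = P) {c : ℝ}
    {g : (Fin d → ℝ) → ℝ} (hg : ∀ y, g y = c * Real.exp (-(1 / 2) * (y ⬝ᵥ P *ᵥ y)))
    (F : Matrix (Fin d) (Fin d) ℝ) (x : Fin d → ℝ) :
    dvg (fun y => g y • (F *ᵥ y)) x = g x * (F.trace - P *ᵥ x ⬝ᵥ F *ᵥ x) := by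
  simp only [dvg, Pi.smul_apply, smul_eq_mul, pd_gaussian_mul_linear hP hg]
  simp [← Finset.mul_sum, Finset.sum_sub_distrib, Matrix.trace, dotProduct]

theorem hess_gaussian {d : ℕ} {P : Matrix (Fin d) (Fin d) ℝ} (hP : Pᵀ = P) {c : ℝ}
    {g : (Fin d → ℝ) → ℝ} (hg : ∀ y, g y = c * Real.exp (-(1 / 2) * (y ⬝ᵥ P *ᵥ y)))
    (x : Fin d → ℝ) :
    hess g x = g x • (vecMulVec (P *ᵥ x) (P *ᵥ x) - P) := by
  ext i j
  have hneg : (fun y => pd j g y) = fun y => g y * ((-P) *ᵥ y) j := by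
    funext y
    rw [pd_gaussian hP hg, neg_mulVec, Pi.neg_apply, mul_neg]
  have hij : P j i = P i j := congrFun (congrFun hP i) j
  simp only [hess, of_apply, hneg, pd_gaussian_mul_linear hP hg]
  rw [neg_mulVec]
  simp only [Matrix.neg_apply, Pi.neg_apply, Matrix.smul_apply, Matrix.sub_apply, vecMulVec_apply,
    hij, smul_eq_mul]
  ring

theorem hasDerivAt_gaussian_time {d : ℕ} {S : ℝ → Matrix (Fin d) (Fin d) ℝ}
    {S' : Matrix (Fin d) (Fin d) ℝ} {t : ℝ} (hpd : (S t).PosDef)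
    (hS : ∀ i j, HasDerivAt (fun s => S s i j) (S' i j) t) (c : ℝ) (z : Fin d → ℝ) :
    HasDerivAt (fun s => c * (S s).det ^ (-(1 : ℝ) / 2) *
        Real.exp (-(1 / 2) * (z ⬝ᵥ (S s)⁻¹ *ᵥ z)))
      (c * (S t).det ^ (-(1 : ℝ) / 2) * Real.exp (-(1 / 2) * (z ⬝ᵥ (S t)⁻¹ *ᵥ z)) *
        (1 / 2 * (z ⬝ᵥ ((S t)⁻¹ * S' * (S t)⁻¹) *ᵥ z) - 1 / 2 * ((S t)⁻¹ * S').trace)) t := by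
  have hpos : 0 < (S t).det := hpd.det_pos
  have hquad : HasDerivAt (fun s => z ⬝ᵥ (S s)⁻¹ *ᵥ z)
      (-(z ⬝ᵥ ((S t)⁻¹ * S' * (S t)⁻¹) *ᵥ z)) t := by
    have h := HasDerivAt.fun_sum (u := Finset.univ) fun i _ =>
      (HasDerivAt.fun_sum (u := Finset.univ) fun j _ =>
        (hasDerivAt_inv_apply hpd.isUnit hS i j).mul_const (z j)).const_mul (z i)
    refine h.congr_deriv ?_
    rw [← dotProduct_neg, ← neg_mulVec]
    rfl
  have hdet := (hasDerivAt_det hS).rpow_const (p := -(1 : ℝ) / 2) (Or.inl hpos.ne')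
  have hadj : (S t).adjugate = (S t).det • (S t)⁻¹ := by
    rw [Matrix.inv_def, Ring.inverse_eq_inv', smul_smul, mul_inv_cancel₀ hpos.ne', one_smul]
  refine ((hdet.const_mul c).fun_mul (hquad.const_mul (-(1 / 2))).exp).congr_deriv ?_
  rw [hadj, Real.rpow_sub_one hpos.ne', smul_mul, trace_smul, smul_eq_mul]
  field_simp
  ring

/-- The algebraic identity between the two sides of the Fokker-Planck equation, divided by the
density, for a centred Gaussian whose covariance has time derivative `F S + S Fᵀ - D`. -/
theorem lyapunov_trace_quadratic {d : ℕ} {S S' F D : Matrix (Fin d) (Fin d) ℝ}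
    (hpd : S.PosDef) (hS' : S' = F * S + S * Fᵀ - D) (z : Fin d → ℝ) :
    1 / 2 * (z ⬝ᵥ (S⁻¹ * S' * S⁻¹) *ᵥ z) - 1 / 2 * (S⁻¹ * S').trace =
      -(F.trace - S⁻¹ *ᵥ z ⬝ᵥ F *ᵥ z)
        - 1 / 2 * (D * (vecMulVec (S⁻¹ *ᵥ z) (S⁻¹ *ᵥ z) - S⁻¹)).trace := by
  have hu : IsUnit S.det := hpd.det_pos.ne'.isUnit
  have hsymm : S⁻¹ᵀ = S⁻¹ := by simpa using hpd.inv.isHermitian.eq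
  have hmove (M : Matrix (Fin d) (Fin d) ℝ) (v : Fin d → ℝ) :
      z ⬝ᵥ (S⁻¹ * M) *ᵥ v = S⁻¹ *ᵥ z ⬝ᵥ M *ᵥ v := by
    rw [← mulVec_mulVec, dotProduct_mulVec, ← mulVec_transpose, hsymm]
  have hexpand : S⁻¹ * S' = S⁻¹ * F * S + Fᵀ - S⁻¹ * D := by
    rw [hS', mul_sub, mul_add, nonsing_inv_mul_cancel_left _ _ hu, Matrix.mul_assoc]
  have hexpand_conj : S⁻¹ * S' * S⁻¹ = S⁻¹ * F + Fᵀ * S⁻¹ - S⁻¹ * (D * S⁻¹) := by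
    rw [hexpand, sub_mul, add_mul, mul_nonsing_inv_cancel_right _ _ hu, Matrix.mul_assoc S⁻¹ D]
  have htrace : (S⁻¹ * S').trace = 2 * F.trace - (D * S⁻¹).trace := by
    rw [hexpand, trace_sub, trace_add, trace_transpose, trace_mul_comm (S⁻¹ * F),
      mul_nonsing_inv_cancel_left _ _ hu, trace_mul_comm D]
    ring
  have hFt : z ⬝ᵥ (Fᵀ * S⁻¹) *ᵥ z = S⁻¹ *ᵥ z ⬝ᵥ F *ᵥ z := by
    rw [← mulVec_mulVec, dotProduct_mulVec, vecMul_transpose, dotProduct_comm]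
  have hD : (D * vecMulVec (S⁻¹ *ᵥ z) (S⁻¹ *ᵥ z)).trace =
      S⁻¹ *ᵥ z ⬝ᵥ D *ᵥ (S⁻¹ *ᵥ z) := by
    rw [mul_vecMulVec, trace_vecMulVec, dotProduct_comm]
  rw [htrace, hexpand_conj, sub_mulVec, add_mulVec, dotProduct_sub, dotProduct_add, hFt, hmove, hmove,
    mul_sub D, trace_sub, hD, mulVec_mulVec]
  ring

/-- under the compatibility condition `BR⁻¹Bᵀ = 2θσσᵀ + θBR̃Bᵀ` (θ > 0),
the mean-field Fokker-Planck equation in the LEQG case holds with the correction term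
identically zero and exploration-noise diffusion matrix `BR̃Bᵀ`. -/
theorem leqg_pos_correction_free_fokker_planck
    (d m k n : ℕ) (T : ℝ) (hT : 0 < T)
    (θ : ℝ) (hθ : 0 < θ)
    (A : Matrix (Fin d) (Fin d) ℝ) (B : Matrix (Fin d) (Fin m) ℝ)
    (C : Matrix (Fin k) (Fin d) ℝ) (σ : Matrix (Fin d) (Fin n) ℝ)
    (R : Matrix (Fin m) (Fin m) ℝ) (hR : R.PosDef)
    (Rtil : Matrix (Fin m) (Fin m) ℝ) (hRtil : Rtil.PosSemidef)
    (hcomp : B * R⁻¹ * Bᵀ = (2 * θ) • (σ * σᵀ) + θ • (B * Rtil * Bᵀ))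
    (S S' : ℝ → Matrix (Fin d) (Fin d) ℝ)
    (hSpd : ∀ t ∈ Set.Icc (0 : ℝ) T, (S t).PosDef)
    (hS : ∀ t ∈ Set.Icc (0 : ℝ) T, ∀ i j, HasDerivAt (fun s => S s i j) (S' t i j) t)
    (hS'cont : ∀ i j, ContinuousOn (fun t => S' t i j) (Set.Icc (0 : ℝ) T))
    (hric : ∀ t ∈ Set.Icc (0 : ℝ) T,
      S' t = A * S t + S t * Aᵀ + θ • (S t * (Cᵀ * C) * S t)
        - θ⁻¹ • (B * R⁻¹ * Bᵀ - θ • (σ * σᵀ)))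
    (ρ : ℝ → (Fin d → ℝ) → ℝ)
    (hρ : ∀ t z, ρ t z =
      (2 * Real.pi) ^ (-(d : ℝ) / 2) * (S t).det ^ (-(1 : ℝ) / 2) *
        Real.exp (-(1 / 2) * (z ⬝ᵥ (S t)⁻¹.mulVec z))) :
    ∀ t ∈ Set.Icc (0 : ℝ) T, ∀ z,
      deriv (fun s => ρ s z) t =
        -(dvg (fun y => ρ t y •
            (A.mulVec y + (θ / 2) • ((S t * (Cᵀ * C)).mulVec y))) z)
        - (1 / 2) * ((B * Rtil * Bᵀ + σ * σᵀ) * hess (ρ t) z).trace := by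
  intro t ht z
  have hpd := hSpd t ht
  have hsymm : (S t)ᵀ = S t := by simpa using hpd.isHermitian.eq
  have hsymm_inv : (S t)⁻¹ᵀ = (S t)⁻¹ := by simpa using hpd.inv.isHermitian.eq
  have hlyap : S' t = (A + (θ / 2) • (S t * (Cᵀ * C))) * S t
      + S t * (A + (θ / 2) • (S t * (Cᵀ * C)))ᵀ - (B * Rtil * Bᵀ + σ * σᵀ) := by
    have hcorr : θ⁻¹ • (B * R⁻¹ * Bᵀ - θ • (σ * σᵀ)) = B * Rtil * Bᵀ + σ * σᵀ := by
      rw [hcomp, two_mul, add_smul, add_sub_right_comm, add_sub_cancel_right, ← smul_add,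
        inv_smul_smul₀ hθ.ne', add_comm]
    have hhalf : θ • (S t * (Cᵀ * C) * S t) =
        (θ / 2) • (S t * (Cᵀ * C) * S t) + (θ / 2) • (S t * (Cᵀ * C) * S t) := by
      rw [← add_smul, add_halves]
    have htr : (A + (θ / 2) • (S t * (Cᵀ * C)))ᵀ = Aᵀ + (θ / 2) • (Cᵀ * C * S t) := by
      simp [transpose_mul, hsymm, Matrix.mul_assoc]
    rw [hric t ht, hcorr, hhalf, htr, add_mul, mul_add, smul_mul, Matrix.mul_smul,
      ← Matrix.mul_assoc (S t) (Cᵀ * C) (S t)]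
    abel
  have hfield : (fun y => ρ t y • (A.mulVec y + (θ / 2) • ((S t * (Cᵀ * C)).mulVec y))) =
      fun y => ρ t y • ((A + (θ / 2) • (S t * (Cᵀ * C))) *ᵥ y) := by
    simp only [add_mulVec, smul_mulVec]
  have htime := hasDerivAt_gaussian_time hpd (hS t ht) ((2 * Real.pi) ^ (-(d : ℝ) / 2)) z
  simp_rw [← hρ] at htime
  rw [htime.deriv, hfield, dvg_gaussian_smul_linear hsymm_inv (hρ t),
    hess_gaussian hsymm_inv (hρ t), lyapunov_trace_quadratic hpd hlyap, Matrix.mul_smul, trace_smul,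
    smul_eq_mul]
  ring
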